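/- Let X be a Lorentzian pre-length space that is locally causally closed and sufficiently causally connected, let T : X → ℝ be a time function, and suppose the background metric of X is the null distance d_T of T and that (X, d_T) is a complete metric space. Assume X has approximate τ-midpoints, and assume there exist c ∈ (0, 1/2] and ε̂ > 0 such that for every pair p ≪ q there is a (τ(p,q)·ε̂)-τ-midpoint m of p and q with (1−c)·T(p) + c·T(q) ≤ T(m) ≤ c·T(p) + (1−c)·T(q). Then X is intrinsic: τ(x,y) = sup{ L_τ(γ) : γ a future-directed causal curve from x to y } for all x, y ∈ X (with sup ∅ = 0). -/

import Mathlib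

open scoped ENNReal

/-- A Lorentzian pre-length space: a metric space together with a timelike relation `≪`,
a causal relation `≤`, and a lower semicontinuous time separation function
`τ : X × X → [0,∞]` satisfying the reverse triangle inequality. -/
structure LorentzianPreLengthSpace (X : Type*) [MetricSpace X] where
  timelike : X → X → Prop
  causal : X → X → Prop
  causal_refl : ∀ x, causal x x
  causal_trans : ∀ {x y z}, causal x y → causal y z → causal x z
  timelike_trans : ∀ {x y z}, timelike x y → timelike y z → timelike x z
  timelike_causal : ∀ {x y}, timelike x y → causal x y
  tau : X → X → ℝ≥0∞
  tau_lsc : LowerSemicontinuous fun p : X × X => tau p.1 p.2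
  tau_rev_triangle : ∀ {x y z}, causal x y → causal y z → tau x y + tau y z ≤ tau x z
  tau_eq_zero_of_not_causal : ∀ {x y}, ¬causal x y → tau x y = 0
  tau_pos_iff_timelike : ∀ {x y}, 0 < tau x y ↔ timelike x y

namespace LorentzianPreLengthSpace

variable {X : Type*} [MetricSpace X] (L : LorentzianPreLengthSpace X)

/-- The strict causal relation `x < y`. -/
def CausallyLt (x y : X) : Prop := L.causal x y ∧ x ≠ y

/-- A future-directed causal curve: a non-constant continuous map `γ : [a,b] → X`
with `γ s ≤ γ t` for `a ≤ s < t ≤ b`. -/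
def IsFutureCausalCurve (γ : ℝ → X) (a b : ℝ) : Prop :=
  a < b ∧ ContinuousOn γ (Set.Icc a b) ∧
    (∃ s ∈ Set.Icc a b, ∃ t ∈ Set.Icc a b, γ s ≠ γ t) ∧
    ∀ ⦃s t : ℝ⦄, a ≤ s → s < t → t ≤ b → L.causal (γ s) (γ t)

/-- A future-directed timelike curve. -/
def IsFutureTimelikeCurve (γ : ℝ → X) (a b : ℝ) : Prop :=
  a < b ∧ ContinuousOn γ (Set.Icc a b) ∧
    (∃ s ∈ Set.Icc a b, ∃ t ∈ Set.Icc a b, γ s ≠ γ t) ∧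
    ∀ ⦃s t : ℝ⦄, a ≤ s → s < t → t ≤ b → L.timelike (γ s) (γ t)

/-- The τ-length of a curve `γ : [a,b] → X`: the infimum over all partitions
`a = t 0 < t 1 < ⋯ < t N = b` of `∑ τ(γ(t i), γ(t (i+1)))`. -/
noncomputable def tauLength (γ : ℝ → X) (a b : ℝ) : ℝ≥0∞ :=
  ⨅ (N : ℕ) (t : Fin (N + 1) → ℝ) (_ : StrictMono t) (_ : t 0 = a)
      (_ : t (Fin.last N) = b),
    ∑ i : Fin N, L.tau (γ (t i.castSucc)) (γ (t i.succ))

/-- A distance realizer from `x` to `y`: a future-directed causal curve from `x` to `y`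
whose τ-length equals `τ(x,y)`. -/
def IsDistanceRealizer (γ : ℝ → X) (a b : ℝ) (x y : X) : Prop :=
  L.IsFutureCausalCurve γ a b ∧ γ a = x ∧ γ b = y ∧ L.tauLength γ a b = L.tau x y

/-- Causal path-connectedness: timelike related points are joined by timelike curves and
strictly causally related points by causal curves. -/
def CausallyPathConnected : Prop :=
  (∀ x y : X, L.timelike x y →
      ∃ (γ : ℝ → X) (a b : ℝ), L.IsFutureTimelikeCurve γ a b ∧ γ a = x ∧ γ b = y) ∧
    ∀ x y : X, L.CausallyLt x y →
      ∃ (γ : ℝ → X) (a b : ℝ), L.IsFutureCausalCurve γ a b ∧ γ a = x ∧ γ b = y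

/-- Sufficiently causally connected: path-connected, causally path-connected, and every
point lies on a timelike curve. -/
def SufficientlyCausallyConnected : Prop :=
  IsPathConnected (Set.univ : Set X) ∧ L.CausallyPathConnected ∧
    ∀ x : X, ∃ (γ : ℝ → X) (a b : ℝ),
      L.IsFutureTimelikeCurve γ a b ∧ ∃ s ∈ Set.Icc a b, γ s = x

/-- Locally causally closed: every point has a neighbourhood `U` on which the causal
relation is closed in the limit sense. -/
def LocallyCausallyClosed : Prop :=
  ∀ x : X, ∃ U ∈ nhds x, ∀ (p q : X) (pn qn : ℕ → X),
    (∀ n, pn n ∈ U) → (∀ n, qn n ∈ U) → p ∈ closure U → q ∈ closure U →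
    Filter.Tendsto pn Filter.atTop (nhds p) → Filter.Tendsto qn Filter.atTop (nhds q) →
    (∀ n, L.causal (pn n) (qn n)) → L.causal p q

/-- A time function: continuous and strictly increasing along the strict causal relation. -/
def IsTimeFunction (T : X → ℝ) : Prop :=
  Continuous T ∧ ∀ x y : X, L.CausallyLt x y → T x < T y

/-- A locally anti-Lipschitz function: every point has a neighbourhood `U` carrying a
metric `dU` such that `T q - T p ≤ dU p q` for causally related `p ≤ q` in `U`. -/
def IsLocallyAntiLipschitz (T : X → ℝ) : Prop :=
  ∀ x : X, ∃ U ∈ nhds x, ∃ dU : X → X → ℝ,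
    (∀ p ∈ U, ∀ q ∈ U, 0 ≤ dU p q) ∧
    (∀ p ∈ U, ∀ q ∈ U, (dU p q = 0 ↔ p = q)) ∧
    (∀ p ∈ U, ∀ q ∈ U, dU p q = dU q p) ∧
    (∀ p ∈ U, ∀ q ∈ U, ∀ r ∈ U, dU p r ≤ dU p q + dU q r) ∧
    ∀ p ∈ U, ∀ q ∈ U, L.causal p q → T q - T p ≤ dU p q

/-- The set of null lengths of piecewise causal curves from `p` to `q` with respect to a
(generalized) time function `T`: for each partitioned curve whose pieces are future- or
past-directed causal, the value `∑ |T(γ(t (i+1))) - T(γ(t i))|`. -/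
def nullLengths (T : X → ℝ) (p q : X) : Set ℝ :=
  { l | ∃ (γ : ℝ → X) (a b : ℝ) (N : ℕ) (t : Fin (N + 1) → ℝ),
      ContinuousOn γ (Set.Icc a b) ∧ StrictMono t ∧ t 0 = a ∧ t (Fin.last N) = b ∧
      (∀ i : Fin N,
        (∀ ⦃u v : ℝ⦄, t i.castSucc ≤ u → u < v → v ≤ t i.succ → L.causal (γ u) (γ v)) ∨
        (∀ ⦃u v : ℝ⦄, t i.castSucc ≤ u → u < v → v ≤ t i.succ → L.causal (γ v) (γ u))) ∧
      γ a = p ∧ γ b = q ∧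
      l = ∑ i : Fin N, |T (γ (t i.succ)) - T (γ (t i.castSucc))| }

/-- The null distance of Sormani–Vega with respect to `T`. -/
noncomputable def nullDist (T : X → ℝ) (p q : X) : ℝ := sInf (L.nullLengths T p q)

/-- `y` is a τ-midpoint of `x` and `z`. -/
def IsTauMidpoint (x y z : X) : Prop :=
  L.tau x y = L.tau x z / 2 ∧ L.tau y z = L.tau x z / 2

/-- `X` has τ-midpoints. -/
def HasTauMidpoints : Prop :=
  ∀ x z : X, L.timelike x z → ∃ y : X, L.IsTauMidpoint x y z

/-- `y` is an ε-τ-midpoint of `x` and `z`: both `τ(x,y)` and `τ(y,z)` differ from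
`τ(x,z)/2` by less than `ε` (the inequalities `a < b + ε ∧ b < a + ε` encode
`|a - b| < ε` in `[0,∞]`). -/
def IsEpsTauMidpoint (ε : ℝ≥0∞) (x y z : X) : Prop :=
  L.tau x z / 2 < L.tau x y + ε ∧ L.tau x y < L.tau x z / 2 + ε ∧
    L.tau x z / 2 < L.tau y z + ε ∧ L.tau y z < L.tau x z / 2 + ε

/-- `X` has approximate τ-midpoints. -/
def HasApproxTauMidpoints : Prop :=
  ∀ x z : X, L.timelike x z → ∀ ε : ℝ≥0∞, 0 < ε → ∃ y : X, L.IsEpsTauMidpoint ε x y z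

/-- `X` is intrinsic: `τ(x,y)` is the supremum of τ-lengths of future-directed causal
curves from `x` to `y` (with `sup ∅ = 0`). -/
def IsIntrinsic : Prop :=
  ∀ x y : X, L.tau x y =
    ⨆ (γ : ℝ → X) (a : ℝ) (b : ℝ) (_ : L.IsFutureCausalCurve γ a b)
      (_ : γ a = x) (_ : γ b = y), L.tauLength γ a b

/-- `X` is causally geodesic: every timelike related pair is joined by a distance
realizer, and every strictly causally but not timelike related pair is joined by a
future-directed causal curve. -/
def IsCausallyGeodesic : Prop :=
  (∀ x y : X, L.timelike x y →
      ∃ (γ : ℝ → X) (a b : ℝ), L.IsDistanceRealizer γ a b x y) ∧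
    ∀ x y : X, L.CausallyLt x y → ¬L.timelike x y →
      ∃ (γ : ℝ → X) (a b : ℝ), L.IsFutureCausalCurve γ a b ∧ γ a = x ∧ γ b = y

end LorentzianPreLengthSpace

/-!
Bisecting by approximate τ-midpoints joins `x` to `y` by chains of arbitrarily small links whose
total τ is as close to `τ(x,y)` as desired. Inserting points at intermediate times makes the time
increments small too; only a bounded number of links needs this, and each has tiny τ, so the total
is hardly affected. Refining such chains successively gives a causally totally ordered set of
points whose times are dense in `[T x, T y]`. Causal distances are at most time differences, so
completeness extends the inverse of `T` on this set to a continuous curve, which is causal by local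
causal closedness. A partition of the curve cuts a chain with links of size `δ` in finitely many
links, each costing at most `δ`, so the τ-length of the curve is at least the limiting total.
-/

/-- Finite chains from `x` to `y` all of whose links satisfy `P`, together with the set `S` of
points they visit and their value `a`, the sum of `f` over the links. Chains are built by
concatenation, so that properties of them are proved by structural induction. -/
inductive WeightedChain {α : Type*} (P : α → α → Prop) (f : α → α → ℝ) :
    α → α → Set α → ℝ → Prop
  | link {x y : α} : P x y → WeightedChain P f x y {x, y} (f x y)
  | concat {x z y : α} {S S' : Set α} {a b : ℝ} :
      WeightedChain P f x z S a → WeightedChain P f z y S' b →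
        WeightedChain P f x y (S ∪ S') (a + b)

/-- `c` is at most the supremum of the values of the `P`-chains from `x` to `y`. -/
def ApproxByChains {α : Type*} (P : α → α → Prop) (f : α → α → ℝ) (x y : α) (c : ℝ) : Prop :=
  ∀ b < c, ∃ S a, WeightedChain P f x y S a ∧ b < a

/-- The reverse triangle inequality for a real-valued `f` along the relation `r`. -/
def ReverseTriangle {α : Type*} (r : α → α → Prop) (f : α → α → ℝ) : Prop :=
  ∀ ⦃x y z⦄, r x y → r y z → f x y + f y z ≤ f x z

namespace WeightedChain

variable {α : Type*} {P Q r : α → α → Prop} {f : α → α → ℝ} {x y w : α} {S : Set α} {a δ : ℝ}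

theorem mono (hPQ : ∀ u v, P u v → Q u v) (h : WeightedChain P f x y S a) :
    WeightedChain Q f x y S a := by
  induction h with
  | link hxy => exact .link (hPQ _ _ hxy)
  | concat _ _ ih ih' => exact .concat ih ih'

theorem left_mem (h : WeightedChain P f x y S a) : x ∈ S := by
  induction h with
  | link => exact .inl rfl
  | concat _ _ ih _ => exact .inl ih

theorem right_mem (h : WeightedChain P f x y S a) : y ∈ S := by
  induction h with
  | link => exact .inr rfl
  | concat _ _ _ ih => exact .inr ih

theorem rel [IsTrans α r] (h : WeightedChain r f x y S a) : r x y := by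
  induction h with
  | link hxy => exact hxy
  | concat _ _ ih ih' => exact _root_.trans ih ih'

theorem rel_of_mem [IsPreorder α r] (h : WeightedChain r f x y S a) :
    ∀ s ∈ S, r x s ∧ r s y := by
  induction h with
  | link hxy => rintro s (rfl | rfl) <;> simp [hxy, refl]
  | concat h h' ih ih' =>
    rintro s (hs | hs)
    · exact ⟨(ih s hs).1, _root_.trans (ih s hs).2 h'.rel⟩
    · exact ⟨_root_.trans h.rel (ih' s hs).1, (ih' s hs).2⟩

theorem rel_or_rel [IsPreorder α r] (h : WeightedChain r f x y S a) :
    ∀ s ∈ S, ∀ t ∈ S, r s t ∨ r t s := by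
  induction h with
  | link hxy => rintro s (rfl | rfl) t (rfl | rfl) <;> simp [hxy, refl]
  | concat h h' ih ih' =>
    rintro s (hs | hs) t (ht | ht)
    · exact ih s hs t ht
    · exact .inl (_root_.trans (h.rel_of_mem s hs).2 (h'.rel_of_mem t ht).1)
    · exact .inr (_root_.trans (h.rel_of_mem t ht).2 (h'.rel_of_mem s hs).1)
    · exact ih' s hs t ht

theorem value_le [IsTrans α r] (hf : ReverseTriangle r f) (h : WeightedChain r f x y S a) :
    a ≤ f x y := by
  induction h with
  | link => exact le_rfl
  | concat h h' ih ih' => exact (add_le_add ih ih').trans (hf h.rel h'.rel)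

theorem exists_mem_abs_sub_lt {T : α → ℝ} (h : WeightedChain (fun u v => T v - T u < δ) f x y S a)
    {v : ℝ} (hv : v ∈ Set.Icc (T x) (T y)) : ∃ s ∈ S, |T s - v| < δ := by
  induction h with
  | @link x y hxy =>
    exact ⟨x, .inl rfl, abs_lt.2 ⟨by linarith [hv.2], by linarith [hv.1, hv.2]⟩⟩
  | @concat x z y S S' _ _ _ _ ih ih' =>
    rcases le_total v (T z) with hvz | hzv
    · obtain ⟨s, hs, hsv⟩ := ih ⟨hv.1, hvz⟩
      exact ⟨s, .inl hs, hsv⟩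
    · obtain ⟨s, hs, hsv⟩ := ih' ⟨hzv, hv.2⟩
      exact ⟨s, .inr hs, hsv⟩

-- Only the link straddling `w` is cut, which costs at most its weight.
theorem exists_tail [IsTrans α r] (hf : ReverseTriangle r f) (hf₀ : ∀ u v, 0 ≤ f u v)
    (h : WeightedChain (fun u v => r u v ∧ f u v ≤ δ) f x y S a) (hxw : r x w) (hwy : r w y)
    (hw : ∀ s ∈ S, r w s ∨ r s w) :
    ∃ S' ⊆ insert w S, ∃ a', WeightedChain (fun u v => r u v ∧ f u v ≤ δ) f w y S' a' ∧
      a ≤ f x w + a' + δ := by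
  induction h with
  | @link x y hxy =>
    have hcut := hf hxw hwy
    exact ⟨{w, y}, Set.insert_subset_insert (by simp), f w y,
      .link ⟨hwy, by linarith [hf₀ x w, hxy.2]⟩, by linarith [hf₀ x w, hf₀ w y, hxy.2]⟩
  | @concat x z y S S' a b h h' ih ih' =>
    rcases hw z (.inl h.right_mem) with hwz | hzw
    · obtain ⟨S₁, hS₁, a₁, h₁, ha₁⟩ := ih hxw hwz fun s hs => hw s (.inl hs)
      exact ⟨S₁ ∪ S', by grind, a₁ + b, h₁.concat h', by linarith⟩
    · obtain ⟨S₁, hS₁, a₁, h₁, ha₁⟩ := ih' hzw hwy fun s hs => hw s (.inr hs)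
      have hcausal := h.mono (Q := r) fun _ _ huv => huv.1
      exact ⟨S₁, by grind, a₁, h₁, by linarith [hf hcausal.rel hzw, hcausal.value_le hf]⟩

theorem value_le_sum_add [IsPreorder α r] (hf : ReverseTriangle r f) (hf₀ : ∀ u v, 0 ≤ f u v)
    {N : ℕ} {p : Fin (N + 1) → α} (hp : ∀ i j, i ≤ j → r (p i) (p j))
    (h : WeightedChain (fun u v => r u v ∧ f u v ≤ δ) f (p 0) (p (Fin.last N)) S a)
    (hpS : ∀ i, ∀ s ∈ S, r (p i) s ∨ r s (p i)) :
    a ≤ ∑ i : Fin N, f (p i.castSucc) (p i.succ) + N * δ := by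
  induction N generalizing S a with
  | zero =>
    have ha : a ≤ f (p 0) (p 0) := (h.mono (Q := r) fun _ _ huv => huv.1).value_le hf
    simpa using ha.trans (by linarith [hf (refl (p 0)) (refl (p 0))])
  | succ N ih =>
    obtain ⟨S', hS', a', h', ha⟩ := h.exists_tail hf hf₀ (hp 0 1 (Fin.zero_le _))
      (hp 1 (Fin.last _) (Fin.le_last _)) (hpS 1)
    have htail := ih (p := fun i => p i.succ) (fun i j hij => hp _ _ (Fin.succ_le_succ_iff.2 hij))
      h' fun i s hs => (hS' hs).elim
        (fun hs₁ => .inr (hs₁ ▸ hp 1 i.succ (Fin.succ_le_succ_iff.2 (Fin.zero_le _))))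
        (hpS i.succ s)
    rw [Fin.sum_univ_succ]
    simp only [Fin.castSucc_zero, Fin.succ_zero_eq_one, ← Fin.succ_castSucc, Nat.cast_add_one]
    linarith

theorem exists_refinement (hPQ : ∀ u v, P u v → ApproxByChains Q f u v (f u v))
    (h : WeightedChain P f x y S a) {b : ℝ} (hb : b < a) :
    ∃ S' a', WeightedChain Q f x y S' a' ∧ S ⊆ S' ∧ b < a' := by
  induction h generalizing b with
  | link hxy =>
    obtain ⟨S', a', h', ha'⟩ := hPQ _ _ hxy b hb
    exact ⟨S', a', h', Set.pair_subset h'.left_mem h'.right_mem, ha'⟩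
  | @concat x z y S₁ S₂ a₁ a₂ _ _ ih₁ ih₂ =>
    obtain ⟨S₁', a₁', h₁, hS₁, ha₁⟩ := ih₁ (b := (b + a₁ - a₂) / 2) (by linarith)
    obtain ⟨S₂', a₂', h₂, hS₂, ha₂⟩ := ih₂ (b := (b + a₂ - a₁) / 2) (by linarith)
    exact ⟨S₁' ∪ S₂', a₁' + a₂', h₁.concat h₂, Set.union_subset_union hS₁ hS₂, by linarith⟩

theorem exists_monotone_seq {P : ℕ → α → α → Prop} (hPr : ∀ k u v, P k u v → r u v)
    (hrP : ∀ k u v, r u v → ApproxByChains (P k) f u v (f u v)) (hxy : r x y) {b : ℝ}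
    (hb : b < f x y) :
    ∃ (S : ℕ → Set α) (a : ℕ → ℝ), Monotone S ∧
      ∀ k, WeightedChain (P k) f x y (S k) (a k) ∧ b < a k := by
  let Stage := {p : Set α × ℝ // WeightedChain r f x y p.1 p.2 ∧ b < p.2}
  have exists_next (k : ℕ) (p : Stage) :
      ∃ q : Stage, WeightedChain (P k) f x y q.1.1 q.1.2 ∧ p.1.1 ⊆ q.1.1 := by
    obtain ⟨⟨S, a⟩, h, ha⟩ := p
    obtain ⟨S', a', h', hS, ha'⟩ := h.exists_refinement (hrP k) ha
    exact ⟨⟨(S', a'), h'.mono (hPr k), ha'⟩, h', hS⟩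
  choose next hnext hsub using exists_next
  let stage : ℕ → Stage := Nat.rec ⟨({x, y}, f x y), .link hxy, hb⟩ next
  exact ⟨fun k => (stage (k + 1)).1.1, fun k => (stage (k + 1)).1.2,
    monotone_nat_of_le_succ fun k => hsub (k + 1) (stage (k + 1)),
    fun k => ⟨hnext k (stage k), (stage (k + 1)).2.2⟩⟩

end WeightedChain

namespace ApproxByChains

variable {α : Type*} {P Q : α → α → Prop} {f : α → α → ℝ} {x y z : α} {c d : ℝ}

theorem of_link (h : P x y) : ApproxByChains P f x y (f x y) := fun _ hb => ⟨_, _, .link h, hb⟩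

theorem of_le (h : ApproxByChains P f x y c) (hd : d ≤ c) : ApproxByChains P f x y d :=
  fun b hb => h b (hb.trans_le hd)

theorem of_forall_lt (h : ∀ b < c, ApproxByChains P f x y b) : ApproxByChains P f x y c :=
  fun _ hb => let ⟨b', hb', hbc⟩ := exists_between hb; h b' hbc _ hb'

theorem concat (h : ApproxByChains P f x z c) (h' : ApproxByChains P f z y d) :
    ApproxByChains P f x y (c + d) := by
  intro b hb
  obtain ⟨S, a, hS, ha⟩ := h ((b + c - d) / 2) (by linarith)
  obtain ⟨S', a', hS', ha'⟩ := h' ((b + d - c) / 2) (by linarith)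
  exact ⟨S ∪ S', a + a', hS.concat hS', by linarith⟩

theorem mono (hPQ : ∀ u v, P u v → Q u v) (h : ApproxByChains P f x y c) :
    ApproxByChains Q f x y c := fun b hb =>
  let ⟨S, a, hS, ha⟩ := h b hb
  ⟨S, a, hS.mono hPQ, ha⟩

end ApproxByChains

theorem exists_continuousOn_leftInvOn_of_antilipschitzWith {X Y : Type*} [EMetricSpace X]
    [CompleteSpace X] [Nonempty X] [PseudoEMetricSpace Y] {K : NNReal} {T : X → Y} {S : Set X}
    (hT : AntilipschitzWith K (S.domRestrict T)) :
    ∃ γ : Y → X, ContinuousOn γ (closure (T '' S)) ∧ Set.LeftInvOn γ T S := by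
  let g := Function.invFunOn T S
  have hleft : Set.LeftInvOn g T S := (Set.injOn_iff_injective.2 hT.injective).leftInvOn_invFunOn
  have hg : UniformContinuousOn g (T '' S) :=
    (lipschitzOnWith_iff_restrict.2 (hT.to_rightInvOn' (fun _ => Function.invFunOn_mem)
      fun _ => Function.invFunOn_eq)).uniformContinuousOn
  refine ⟨extendFrom (T '' S) g, continuousOn_extendFrom le_rfl fun v hv => ?_, fun s hs =>
    (extendFrom_extends hg.continuousOn _ ⟨s, hs, rfl⟩).trans (hleft hs)⟩
  have := mem_closure_iff_nhdsWithin_neBot.1 hv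
  exact CompleteSpace.complete ((cauchy_nhds.mono nhdsWithin_le_nhds).map_of_le hg inf_le_right)

theorem mem_closure_rel_of_continuousOn_closure {X Y : Type*} [TopologicalSpace X]
    [TopologicalSpace Y] [LinearOrder Y] [OrderClosedTopology Y] {r : X → X → Prop} {γ : Y → X}
    {D : Set Y}
    (hγ : ContinuousOn γ (closure D)) (hr : ∀ u ∈ D, ∀ v ∈ D, u < v → r (γ u) (γ v)) {u v : Y}
    (hu : u ∈ closure D) (hv : v ∈ closure D) (huv : u < v) :
    (γ u, γ v) ∈ closure {z : X × X | r z.1 z.2} := by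
  have huvD : (u, v) ∈ closure (D ×ˢ D) := by
    rw [closure_prod_eq]
    exact ⟨hu, hv⟩
  have huv' : (u, v) ∈ closure ({z : Y × Y | z.1 < z.2} ∩ D ×ˢ D) :=
    isOpen_lt_prod.inter_closure ⟨huv, huvD⟩
  have hcont : ContinuousWithinAt (Prod.map γ γ) (closure D ×ˢ closure D) (u, v) :=
    (hγ.prodMap hγ) (u, v) ⟨hu, hv⟩
  exact (hcont.mono fun z hz => ⟨subset_closure hz.2.1, subset_closure hz.2.2⟩).mem_closure huv'
    fun z hz => hr _ hz.2.1 _ hz.2.2 hz.1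

namespace LorentzianPreLengthSpace

section LocalCausalClosedness

variable {X : Type*} [MetricSpace X] {L : LorentzianPreLengthSpace X} {γ : ℝ → X} {D : Set ℝ}

instance : IsPreorder X L.causal where
  refl := L.causal_refl
  trans _ _ _ := L.causal_trans

theorem LocallyCausallyClosed.exists_isOpen (h : L.LocallyCausallyClosed) (x : X) :
    ∃ U, IsOpen U ∧ x ∈ U ∧
      ∀ p ∈ U, ∀ q ∈ U, (p, q) ∈ closure {z : X × X | L.causal z.1 z.2} → L.causal p q := by
  obtain ⟨U, hU, hclosed⟩ := h x
  refine ⟨interior U, isOpen_interior, mem_interior_iff_mem_nhds.2 hU, fun p hp q hq hpq => ?_⟩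
  have hpqU : (p, q) ∈ closure ((interior U ×ˢ interior U) ∩ {z : X × X | L.causal z.1 z.2}) :=
    (isOpen_interior.prod isOpen_interior).inter_closure ⟨⟨hp, hq⟩, hpq⟩
  obtain ⟨z, hz, hlim⟩ := mem_closure_iff_seq_limit.1 hpqU
  exact hclosed p q (fun n => (z n).1) (fun n => (z n).2) (fun n => interior_subset (hz n).1.1)
    (fun n => interior_subset (hz n).1.2) (subset_closure (interior_subset hp))
    (subset_closure (interior_subset hq)) hlim.fst_nhds hlim.snd_nhds fun n => (hz n).2

theorem LocallyCausallyClosed.exists_isOpen_causal (h : L.LocallyCausallyClosed)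
    (hγ : ContinuousOn γ (closure D)) (hD : ∀ u ∈ D, ∀ v ∈ D, u < v → L.causal (γ u) (γ v))
    {t : ℝ} (ht : t ∈ closure D) :
    ∃ V, IsOpen V ∧ t ∈ V ∧
      ∀ u ∈ V ∩ closure D, ∀ v ∈ V ∩ closure D, u < v → L.causal (γ u) (γ v) := by
  obtain ⟨U, hU, htU, hclosed⟩ := h.exists_isOpen (γ t)
  obtain ⟨V, hV, hVU⟩ := (continuousOn_iff'.1 hγ) U hU
  have hmem : ∀ u ∈ V ∩ closure D, γ u ∈ U := fun u hu => (hVU.superset hu).1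
  exact ⟨V, hV, (hVU.subset ⟨htU, ht⟩).1, fun u hu v hv huv =>
    hclosed _ (hmem u hu) _ (hmem v hv)
      (mem_closure_rel_of_continuousOn_closure hγ hD hu.2 hv.2 huv)⟩

theorem LocallyCausallyClosed.causal_of_Icc_subset_closure (h : L.LocallyCausallyClosed)
    (hγ : ContinuousOn γ (closure D)) (hD : ∀ u ∈ D, ∀ v ∈ D, u < v → L.causal (γ u) (γ v))
    {s t : ℝ} (hst : s < t) (hIcc : Set.Icc s t ⊆ closure D) : L.causal (γ s) (γ t) := by
  obtain ⟨m, hsm, hmt⟩ := exists_between hst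
  have hs := hIcc (Set.left_mem_Icc.2 hst.le)
  have ht := hIcc (Set.right_mem_Icc.2 hst.le)
  obtain ⟨V, hV, hsV, hcausalV⟩ := h.exists_isOpen_causal hγ hD hs
  obtain ⟨W, hW, htW, hcausalW⟩ := h.exists_isOpen_causal hγ hD ht
  obtain ⟨u, huV, hu⟩ := Filter.nonempty_of_mem (Filter.inter_mem
    (mem_nhdsWithin_of_mem_nhds (hV.mem_nhds hsV)) (Ioo_mem_nhdsGT hsm))
  obtain ⟨w, hwW, hw⟩ := Filter.nonempty_of_mem (Filter.inter_mem
    (mem_nhdsWithin_of_mem_nhds (hW.mem_nhds htW)) (Ioo_mem_nhdsLT hmt))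
  obtain ⟨u', ⟨hu'V, hu'⟩, hu'D⟩ := mem_closure_iff.1
    (hIcc ⟨hu.1.le, (hu.2.trans hmt).le⟩) _ (hV.inter isOpen_Ioo) ⟨huV, hu⟩
  obtain ⟨w', ⟨hw'W, hw'⟩, hw'D⟩ := mem_closure_iff.1
    (hIcc ⟨(hsm.trans hw.1).le, hw.2.le⟩) _ (hW.inter isOpen_Ioo) ⟨hwW, hw⟩
  have hsu : L.causal (γ s) (γ u') := hcausalV s ⟨hsV, hs⟩ u' ⟨hu'V, subset_closure hu'D⟩ hu'.1
  have huw : L.causal (γ u') (γ w') := hD u' hu'D w' hw'D (hu'.2.trans hw'.1)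
  have hwt : L.causal (γ w') (γ t) := hcausalW w' ⟨hw'W, subset_closure hw'D⟩ t ⟨htW, ht⟩ hw'.2
  exact L.causal_trans hsu (L.causal_trans huw hwt)

end LocalCausalClosedness

section TimeSeparation

variable {X : Type*} [MetricSpace X] (L : LorentzianPreLengthSpace X)

/-- The time separation as a real number; it carries no information where `τ = ∞`, which
`toReal` sends to `0`. -/
noncomputable def tauReal (x y : X) : ℝ := (L.tau x y).toReal

/-- Finiteness of the time separation, under which `tauReal` is faithful. -/
def IsTauFinite : Prop := ∀ x y, L.tau x y ≠ ⊤

theorem tauReal_nonneg (x y : X) : 0 ≤ L.tauReal x y := ENNReal.toReal_nonneg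

variable {L} {x y : X}

theorem HasApproxTauMidpoints.isTauFinite (h : L.HasApproxTauMidpoints) : L.IsTauFinite := by
  intro x y hxy
  obtain ⟨m, hm, -⟩ := h x y (L.tau_pos_iff_timelike.1 (by simp [hxy])) 1 one_pos
  rw [hxy, ENNReal.top_div_of_ne_top (by simp)] at hm
  exact not_top_lt hm

theorem IsTauFinite.reverseTriangle (h : L.IsTauFinite) : ReverseTriangle L.causal L.tauReal := by
  intro x y z hxy hyz
  unfold tauReal
  rw [← ENNReal.toReal_add (h _ _) (h _ _)]
  exact ENNReal.toReal_mono (h _ _) (L.tau_rev_triangle hxy hyz)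

theorem IsTauFinite.tauReal_pos_iff (h : L.IsTauFinite) : 0 < L.tauReal x y ↔ L.timelike x y := by
  rw [← L.tau_pos_iff_timelike, tauReal, ENNReal.toReal_pos_iff,
    and_iff_left (lt_top_iff_ne_top.2 (h x y))]

theorem IsTauFinite.causallyLt_of_timelike (h : L.IsTauFinite) (hxy : L.timelike x y) :
    L.CausallyLt x y := by
  refine ⟨L.timelike_causal hxy, ?_⟩
  rintro rfl
  linarith [h.reverseTriangle (L.causal_refl x) (L.causal_refl x), h.tauReal_pos_iff.2 hxy]

theorem HasApproxTauMidpoints.exists_abs_tauReal_sub_lt (h : L.HasApproxTauMidpoints)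
    (hxy : L.timelike x y) {ε : ℝ} (hε : 0 < ε) :
    ∃ m, |L.tauReal x m - L.tauReal x y / 2| < ε ∧ |L.tauReal m y - L.tauReal x y / 2| < ε := by
  have toReal_lt {a b : ℝ≥0∞} (hb : b ≠ ⊤) (hab : a < b + ENNReal.ofReal ε) :
      a.toReal < b.toReal + ε := by
    refine ENNReal.toReal_lt_of_lt_ofReal ?_
    rwa [ENNReal.ofReal_add ENNReal.toReal_nonneg hε.le, ENNReal.ofReal_toReal hb]
  have hhalf : (L.tau x y / 2).toReal = L.tauReal x y / 2 := by simp [tauReal]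
  have hfin : L.tau x y / 2 ≠ ⊤ := ENNReal.div_ne_top (h.isTauFinite x y) two_ne_zero
  obtain ⟨m, h₁, h₂, h₃, h₄⟩ := h x y hxy (ENNReal.ofReal ε) (ENNReal.ofReal_pos.2 hε)
  have hxm_gt : L.tauReal x y / 2 < L.tauReal x m + ε := hhalf ▸ toReal_lt (h.isTauFinite x m) h₁
  have hxm_lt : L.tauReal x m < L.tauReal x y / 2 + ε := hhalf ▸ toReal_lt hfin h₂
  have hmy_gt : L.tauReal x y / 2 < L.tauReal m y + ε := hhalf ▸ toReal_lt (h.isTauFinite m y) h₃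
  have hmy_lt : L.tauReal m y < L.tauReal x y / 2 + ε := hhalf ▸ toReal_lt hfin h₄
  exact ⟨m, abs_lt.2 ⟨by linarith, by linarith⟩, abs_lt.2 ⟨by linarith, by linarith⟩⟩

theorem tauLength_le_tau (γ : ℝ → X) {a b : ℝ} (hab : a < b) :
    L.tauLength γ a b ≤ L.tau (γ a) (γ b) := by
  refine iInf_le_of_le 1 <| iInf_le_of_le ![a, b] <| iInf_le_of_le ?_ <|
    iInf_le_of_le rfl <| iInf_le_of_le rfl ?_
  · simpa [Fin.strictMono_iff_lt_succ] using hab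
  · simp

theorem IsIntrinsic.of_forall_lt_exists_le_tauLength
    (h : ∀ x y, ∀ c < L.tau x y, ∃ γ a b,
      L.IsFutureCausalCurve γ a b ∧ γ a = x ∧ γ b = y ∧ c ≤ L.tauLength γ a b) :
    L.IsIntrinsic := by
  intro x y
  refine le_antisymm (le_of_forall_lt_imp_le_of_dense fun c hc => ?_) ?_
  · obtain ⟨γ, a, b, hγ, ha, hb, hle⟩ := h x y c hc
    exact hle.trans <| le_iSup_of_le γ <| le_iSup_of_le a <| le_iSup_of_le b <|
      le_iSup_of_le hγ <| le_iSup_of_le ha <| le_iSup_of_le hb le_rfl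
  · simp only [iSup_le_iff]
    rintro γ a b hγ rfl rfl
    exact tauLength_le_tau γ hγ.1

theorem IsFutureCausalCurve.causal_of_le {γ : ℝ → X} {a b s t : ℝ}
    (h : L.IsFutureCausalCurve γ a b) (hs : a ≤ s) (hst : s ≤ t) (ht : t ≤ b) :
    L.causal (γ s) (γ t) := by
  rcases hst.eq_or_lt with rfl | hst
  · exact L.causal_refl _
  · exact h.2.2.2 hs hst ht

theorem IsFutureCausalCurve.ofReal_le_tauLength {γ : ℝ → X} {A B b : ℝ}
    (hγ : L.IsFutureCausalCurve γ A B) (htau : L.IsTauFinite)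
    (hchain : ∀ δ > 0, ∃ S ⊆ γ '' Set.Icc A B, ∃ a,
      WeightedChain (fun u v => L.causal u v ∧ L.tauReal u v ≤ δ) L.tauReal (γ A) (γ B) S a ∧
        b ≤ a) :
    ENNReal.ofReal b ≤ L.tauLength γ A B := by
  simp only [tauLength, le_iInf_iff]
  rintro N t ht rfl rfl
  have hmem (i) : t i ∈ Set.Icc (t 0) (t (Fin.last N)) :=
    ⟨ht.monotone (Fin.zero_le i), ht.monotone (Fin.le_last i)⟩
  have hsum : b ≤ ∑ i : Fin N, L.tauReal (γ (t i.castSucc)) (γ (t i.succ)) := by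
    refine le_of_forall_pos_le_add fun η hη => ?_
    obtain ⟨S, hS, a, h, hba⟩ := hchain (η / (N + 1)) (by positivity)
    refine hba.trans <| (h.value_le_sum_add (p := fun i => γ (t i)) htau.reverseTriangle
      L.tauReal_nonneg (fun i j hij => hγ.causal_of_le (hmem i).1 (ht.monotone hij) (hmem j).2)
      fun i s hs => ?_).trans ?_
    · obtain ⟨v, hv, rfl⟩ := hS hs
      exact (le_total (t i) v).imp (fun hiv => hγ.causal_of_le (hmem i).1 hiv hv.2)
        fun hvi => hγ.causal_of_le hv.1 hvi (hmem i).2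
    · gcongr
      rw [mul_div_assoc', div_le_iff₀ (by positivity)]
      linarith
  refine (ENNReal.ofReal_le_ofReal hsum).trans_eq ?_
  rw [ENNReal.ofReal_sum_of_nonneg fun i _ => L.tauReal_nonneg _ _]
  exact Finset.sum_congr rfl fun i _ => ENNReal.ofReal_toReal (htau _ _)

end TimeSeparation

section TimeFunctions

variable {X : Type*} [MetricSpace X] (L : LorentzianPreLengthSpace X) (T : X → ℝ)

/-- `T` is anti-Lipschitz along the causal relation: its increments dominate distances. In
`IsLocallyAntiLipschitz` the inequality points the other way. -/
def IsCausallyAntiLipschitz : Prop := ∀ ⦃x y⦄, L.causal x y → dist x y ≤ T y - T x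

/-- Every value between `T x` and `T y`, where `x ≤ y`, is attained causally between `x` and `y`.
This is what causal curves contribute to the construction of fine chains. -/
def HasIntermediateTimes : Prop :=
  ∀ ⦃x y⦄, L.causal x y → ∀ v ∈ Set.Icc (T x) (T y), ∃ z, L.causal x z ∧ L.causal z y ∧ T z = v

/-- A causal link along which the time increases by less than `δ` and whose time separation is at
most `μ`. -/
def IsFineLink (δ μ : ℝ) (x y : X) : Prop :=
  L.causal x y ∧ T y - T x < δ ∧ L.tauReal x y ≤ μ

variable {L T} {x y : X}

theorem IsTimeFunction.le_of_causal (hT : L.IsTimeFunction T) (hxy : L.causal x y) : T x ≤ T y := by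
  rcases eq_or_ne x y with rfl | hne
  · exact le_rfl
  · exact (hT.2 x y ⟨hxy, hne⟩).le

theorem CausallyPathConnected.hasIntermediateTimes (h : L.CausallyPathConnected)
    (hT : Continuous T) : L.HasIntermediateTimes T := by
  intro x y hxy v hv
  rcases eq_or_ne x y with rfl | hne
  · exact ⟨x, hxy, hxy, le_antisymm hv.1 hv.2⟩
  · obtain ⟨γ, a, b, hγ, rfl, rfl⟩ := h.2 x y ⟨hxy, hne⟩
    obtain ⟨s, hs, rfl⟩ := intermediate_value_Icc hγ.1.le (hT.comp_continuousOn hγ.2.1) hv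
    exact ⟨γ s, hγ.causal_of_le le_rfl hs.1 hs.2, hγ.causal_of_le hs.1 hs.2 le_rfl, rfl⟩

theorem IsFutureCausalCurve.abs_sub_mem_nullLengths {γ : ℝ → X} {a b : ℝ}
    (h : L.IsFutureCausalCurve γ a b) : |T (γ b) - T (γ a)| ∈ L.nullLengths T (γ a) (γ b) := by
  refine ⟨γ, a, b, 1, ![a, b], h.2.1, ?_, rfl, rfl, fun i => .inl ?_, rfl, rfl, by simp⟩
  · simpa [Fin.strictMono_iff_lt_succ] using h.1
  · fin_cases i
    exact h.2.2.2

theorem nullDist_le_of_mem {l : ℝ} (h : l ∈ L.nullLengths T x y) : L.nullDist T x y ≤ l := by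
  refine csInf_le ⟨0, ?_⟩ h
  rintro _ ⟨_, _, _, _, _, _, _, _, _, _, _, _, rfl⟩
  exact Finset.sum_nonneg fun _ _ => abs_nonneg _

theorem IsTimeFunction.isCausallyAntiLipschitz (hT : L.IsTimeFunction T)
    (h : L.CausallyPathConnected) (hdist : ∀ p q, dist p q = L.nullDist T p q) :
    L.IsCausallyAntiLipschitz T := by
  intro x y hxy
  rw [← abs_of_nonneg (sub_nonneg.2 (hT.le_of_causal hxy))]
  rcases eq_or_ne x y with rfl | hne
  · simp
  · obtain ⟨γ, a, b, hγ, rfl, rfl⟩ := h.2 x y ⟨hxy, hne⟩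
    exact (hdist _ _).trans_le (nullDist_le_of_mem hγ.abs_sub_mem_nullLengths)

theorem IsCausallyAntiLipschitz.le_of_causal (h : L.IsCausallyAntiLipschitz T)
    (hxy : L.causal x y) : T x ≤ T y :=
  sub_nonneg.1 (dist_nonneg.trans (h hxy))

theorem IsCausallyAntiLipschitz.lt_of_causallyLt (h : L.IsCausallyAntiLipschitz T)
    (hxy : L.CausallyLt x y) : T x < T y :=
  sub_pos.1 ((dist_pos.2 hxy.2).trans_le (h hxy.1))

end TimeFunctions

section FineChains

variable {X : Type*} [MetricSpace X] {L : LorentzianPreLengthSpace X} {T : X → ℝ} {x y : X}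
  {δ μ : ℝ}

-- An approximate midpoint can be taken to keep at most 3/4 of the separation on either side.
theorem HasApproxTauMidpoints.approxByChains_tauReal_le (h_mid : L.HasApproxTauMidpoints)
    (hxy : L.causal x y) (n : ℕ) (hn : (3 / 4) ^ n * L.tauReal x y ≤ μ) :
    ApproxByChains (fun u v => L.causal u v ∧ L.tauReal u v ≤ μ) L.tauReal x y
      (L.tauReal x y) := by
  induction n generalizing x y with
  | zero => exact .of_link ⟨hxy, by simpa using hn⟩
  | succ n ih =>
    by_cases htl : L.timelike x y
    swap
    · rw [← h_mid.isTauFinite.tauReal_pos_iff, not_lt] at htl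
      have h₀ := htl.antisymm (L.tauReal_nonneg x y)
      exact .of_link ⟨hxy, by simpa [h₀] using hn⟩
    refine .of_forall_lt fun b hb => ?_
    have hpos := h_mid.isTauFinite.tauReal_pos_iff.2 htl
    obtain ⟨ε, hε, hεlt⟩ := exists_between (show
      0 < min ((L.tauReal x y - b) / 2) (L.tauReal x y / 4) from lt_min (by linarith) (by linarith))
    rw [lt_min_iff] at hεlt
    obtain ⟨m, hxm, hmy⟩ := h_mid.exists_abs_tauReal_sub_lt htl hε
    rw [abs_lt] at hxm hmy
    have half {u v : X} (hpos : 0 < L.tauReal u v) (hle : L.tauReal u v ≤ 3 / 4 * L.tauReal x y) :=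
      ih (L.timelike_causal (h_mid.isTauFinite.tauReal_pos_iff.1 hpos)) <| calc
        (3 / 4) ^ n * L.tauReal u v ≤ (3 / 4) ^ n * (3 / 4 * L.tauReal x y) := by gcongr
        _ ≤ μ := by rwa [← mul_assoc, ← pow_succ]
    exact ((half (by linarith) (by linarith)).concat (half (by linarith) (by linarith))).of_le
      (by linarith)

variable (hmono : ∀ ⦃u v⦄, L.causal u v → T u ≤ T v)

include hmono

theorem HasIntermediateTimes.approxByChains_isFineLink_zero (h_int : L.HasIntermediateTimes T)
    (htau : L.IsTauFinite) (hxy : L.causal x y) (hμ : L.tauReal x y ≤ μ) (n : ℕ)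
    (hn : T y - T x < 2 ^ n * δ) : ApproxByChains (L.IsFineLink T δ μ) L.tauReal x y 0 := by
  induction n generalizing x y with
  | zero => exact .of_le (.of_link ⟨hxy, by simpa using hn, hμ⟩) (L.tauReal_nonneg x y)
  | succ n ih =>
    have hT := hmono hxy
    obtain ⟨z, hxz, hzy, hz⟩ := h_int hxy ((T x + T y) / 2) ⟨by linarith, by linarith⟩
    have hτ := htau.reverseTriangle hxz hzy
    rw [pow_succ] at hn
    simpa using (ih hxz (by linarith [L.tauReal_nonneg z y]) (by linarith)).concat
      (ih hzy (by linarith [L.tauReal_nonneg x z]) (by linarith))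

-- A link with `T`-increment at least `δ` is replaced at the cost of at most `μ`, and there are at
-- most `(T y - T x) / δ` of them.
theorem HasIntermediateTimes.approxByChains_isFineLink_of_chain (h_int : L.HasIntermediateTimes T)
    (htau : L.IsTauFinite) (hδ : 0 < δ) (hμ : 0 ≤ μ) {S : Set X} {a : ℝ}
    (h : WeightedChain (fun u v => L.causal u v ∧ L.tauReal u v ≤ μ) L.tauReal x y S a) :
    ApproxByChains (L.IsFineLink T δ μ) L.tauReal x y (a - (T y - T x) / δ * μ) := by
  induction h with
  | @link x y hxy =>
    by_cases hlt : T y - T x < δ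
    · have hcost : 0 ≤ (T y - T x) / δ * μ :=
        mul_nonneg (div_nonneg (sub_nonneg.2 (hmono hxy.1)) hδ.le) hμ
      exact .of_le (.of_link ⟨hxy.1, hlt, hxy.2⟩) (by linarith)
    · obtain ⟨n, hn⟩ := pow_unbounded_of_one_lt ((T y - T x) / δ) one_lt_two
      have hcost : μ ≤ (T y - T x) / δ * μ :=
        le_mul_of_one_le_left hμ ((one_le_div hδ).2 (not_lt.1 hlt))
      exact (h_int.approxByChains_isFineLink_zero hmono htau hxy.1 hxy.2 n
        ((div_lt_iff₀ hδ).1 hn)).of_le (by linarith [hxy.2])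
  | concat _ _ ih ih' => exact (ih.concat ih').of_le (le_of_eq (by ring))

theorem HasIntermediateTimes.approxByChains_isFineLink (h_int : L.HasIntermediateTimes T)
    (h_mid : L.HasApproxTauMidpoints) (hδ : 0 < δ) (hμ : 0 < μ) (hxy : L.causal x y) :
    ApproxByChains (L.IsFineLink T δ μ) L.tauReal x y (L.tauReal x y) := by
  refine .of_forall_lt fun b hb => ?_
  obtain ⟨b', hbb', hb'⟩ := exists_between hb
  have hcost_tendsto : Filter.Tendsto (fun μ' => (T y - T x) / δ * μ') (nhdsWithin 0 (Set.Ioi 0))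
      (nhds 0) :=
    (Continuous.tendsto' (by fun_prop) _ _ (mul_zero _)).mono_left nhdsWithin_le_nhds
  obtain ⟨μ', hcost, hμ', hμ'μ⟩ :=
    ((hcost_tendsto.eventually_le_const (sub_pos.2 hbb')).and (Ioc_mem_nhdsGT hμ)).exists
  have htau_tendsto : Filter.Tendsto (fun n : ℕ => (3 / 4) ^ n * L.tauReal x y) Filter.atTop
      (nhds 0) := by
    simpa using (tendsto_pow_atTop_nhds_zero_of_lt_one (r := (3 / 4 : ℝ)) (by norm_num)
      (by norm_num)).mul_const (L.tauReal x y)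
  obtain ⟨n, hn⟩ := (htau_tendsto.eventually_le_const hμ').exists
  obtain ⟨S, a, h, ha⟩ := h_mid.approxByChains_tauReal_le hxy n hn b' hb'
  exact ((h_int.approxByChains_isFineLink_of_chain hmono h_mid.isTauFinite hδ hμ'.le h).of_le
    (by linarith)).mono fun _ _ huv => ⟨huv.1, huv.2.1, huv.2.2.trans hμ'μ⟩

end FineChains

section LimitCurve

variable {X : Type*} [MetricSpace X] [CompleteSpace X] {L : LorentzianPreLengthSpace X}
  {T : X → ℝ} {x y : X}

theorem IsCausallyAntiLipschitz.exists_isFutureCausalCurve (h_anti : L.IsCausallyAntiLipschitz T)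
    (h_lcc : L.LocallyCausallyClosed) {S : Set X}
    (hS : ∀ s ∈ S, ∀ t ∈ S, L.causal s t ∨ L.causal t s) (hx : x ∈ S) (hy : y ∈ S)
    (hxy : T x < T y) (hdense : Set.Icc (T x) (T y) ⊆ closure (T '' S)) :
    ∃ γ, L.IsFutureCausalCurve γ (T x) (T y) ∧ Set.LeftInvOn γ T S := by
  have hanti : AntilipschitzWith 1 (S.domRestrict T) := AntilipschitzWith.of_le_mul_dist <| by
    rintro ⟨s, hs⟩ ⟨t, ht⟩
    rw [NNReal.coe_one, one_mul, Real.dist_eq]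
    rcases hS s hs t ht with h | h
    · exact (h_anti h).trans (abs_sub_comm (T s) (T t) ▸ le_abs_self _)
    · exact dist_comm s t ▸ (h_anti h).trans (le_abs_self _)
  have : Nonempty X := ⟨x⟩
  obtain ⟨γ, hγ, hinv⟩ := exists_continuousOn_leftInvOn_of_antilipschitzWith hanti
  have hD : ∀ u ∈ T '' S, ∀ v ∈ T '' S, u < v → L.causal (γ u) (γ v) := by
    rintro _ ⟨s, hs, rfl⟩ _ ⟨t, ht, rfl⟩ hst
    rw [hinv hs, hinv ht]
    exact (hS s hs t ht).resolve_right fun h => hst.not_ge (h_anti.le_of_causal h)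
  have hne : γ (T x) ≠ γ (T y) := by
    rw [hinv hx, hinv hy]
    exact fun h => hxy.ne (congrArg T h)
  exact ⟨γ, ⟨hxy, hγ.mono hdense,
    ⟨T x, Set.left_mem_Icc.2 hxy.le, T y, Set.right_mem_Icc.2 hxy.le, hne⟩,
    fun s t hs hst ht => h_lcc.causal_of_Icc_subset_closure hγ hD hst
      ((Set.Icc_subset_Icc hs ht).trans hdense)⟩, hinv⟩

theorem exists_isFutureCausalCurve_ofReal_le_tauLength (h_lcc : L.LocallyCausallyClosed)
    (h_anti : L.IsCausallyAntiLipschitz T) (h_int : L.HasIntermediateTimes T)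
    (h_mid : L.HasApproxTauMidpoints) (hxy : L.CausallyLt x y) {b : ℝ} (hb : b < L.tauReal x y) :
    ∃ γ, L.IsFutureCausalCurve γ (T x) (T y) ∧ γ (T x) = x ∧ γ (T y) = y ∧
      ENNReal.ofReal b ≤ L.tauLength γ (T x) (T y) := by
  have hfine (k : ℕ) (u v : X) (huv : L.causal u v) : ApproxByChains
      (L.IsFineLink T (1 / (k + 1)) (1 / (k + 1))) L.tauReal u v (L.tauReal u v) :=
    h_int.approxByChains_isFineLink (fun _ _ => h_anti.le_of_causal) h_mid
      Nat.one_div_pos_of_nat Nat.one_div_pos_of_nat huv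
  obtain ⟨S, a, hmono, hS⟩ :=
    WeightedChain.exists_monotone_seq (fun _ _ _ h => h.1) hfine hxy.1 hb
  have hcausal (k : ℕ) : WeightedChain L.causal L.tauReal x y (S k) (a k) :=
    (hS k).1.mono fun _ _ h => h.1
  have hxS : x ∈ ⋃ k, S k := Set.mem_iUnion.2 ⟨0, (hS 0).1.left_mem⟩
  have hyS : y ∈ ⋃ k, S k := Set.mem_iUnion.2 ⟨0, (hS 0).1.right_mem⟩
  have htotal : ∀ s ∈ ⋃ k, S k, ∀ t ∈ ⋃ k, S k, L.causal s t ∨ L.causal t s := by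
    simp only [Set.mem_iUnion]
    rintro s ⟨k, hs⟩ t ⟨l, ht⟩
    exact (hcausal (max k l)).rel_or_rel s (hmono (le_max_left k l) hs) t
      (hmono (le_max_right k l) ht)
  have hdense : Set.Icc (T x) (T y) ⊆ closure (T '' ⋃ k, S k) := by
    intro v hv
    refine Metric.mem_closure_iff.2 fun δ hδ => ?_
    obtain ⟨k, hk⟩ := exists_nat_one_div_lt hδ
    obtain ⟨s, hs, hsv⟩ := ((hS k).1.mono fun _ _ h => h.2.1).exists_mem_abs_sub_lt hv
    refine ⟨T s, ⟨s, Set.mem_iUnion.2 ⟨k, hs⟩, rfl⟩, ?_⟩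
    rw [dist_comm, Real.dist_eq]
    exact hsv.trans hk
  obtain ⟨γ, hγ, hinv⟩ := h_anti.exists_isFutureCausalCurve h_lcc htotal hxS hyS
    (h_anti.lt_of_causallyLt hxy) hdense
  refine ⟨γ, hγ, hinv hxS, hinv hyS, hγ.ofReal_le_tauLength h_mid.isTauFinite fun δ hδ => ?_⟩
  rw [hinv hxS, hinv hyS]
  obtain ⟨k, hk⟩ := exists_nat_one_div_lt hδ
  refine ⟨S k, fun s hs => ?_, a k, (hS k).1.mono fun _ _ h => ⟨h.1, h.2.2.trans hk.le⟩,
    (hS k).2.le⟩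
  obtain ⟨hxs, hsy⟩ := (hcausal k).rel_of_mem s hs
  exact ⟨T s, ⟨h_anti.le_of_causal hxs, h_anti.le_of_causal hsy⟩,
    hinv (Set.mem_iUnion.2 ⟨k, hs⟩)⟩

end LimitCurve

end LorentzianPreLengthSpace

theorem approx_tau_midpoints_imply_intrinsic_general {X : Type*} [MetricSpace X] [CompleteSpace X]
    {L : LorentzianPreLengthSpace X} {T : X → ℝ} (h_lcc : L.LocallyCausallyClosed)
    (h_anti : L.IsCausallyAntiLipschitz T) (h_int : L.HasIntermediateTimes T)
    (h_mid : L.HasApproxTauMidpoints) : L.IsIntrinsic := by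
  refine .of_forall_lt_exists_le_tauLength fun x y c hc => ?_
  have htl : L.timelike x y := L.tau_pos_iff_timelike.1 (bot_le.trans_lt hc)
  have hb : c.toReal < L.tauReal x y :=
    (ENNReal.toReal_lt_toReal hc.ne_top (h_mid.isTauFinite x y)).2 hc
  obtain ⟨γ, hγ, hx, hy, hle⟩ := L.exists_isFutureCausalCurve_ofReal_le_tauLength h_lcc h_anti h_int
    h_mid (h_mid.isTauFinite.causallyLt_of_timelike htl) hb
  exact ⟨γ, T x, T y, hγ, hx, hy, ENNReal.ofReal_toReal hc.ne_top ▸ hle⟩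

/-- **Approximate τ-midpoints imply being intrinsic.**
Let `X` be a locally causally closed and sufficiently causally connected Lorentzian
pre-length space, `T` a time function, suppose the background metric is the null distance
`d_T` and `(X, d_T)` is complete. If `X` has approximate τ-midpoints and there are
`c ∈ (0, 1/2]` and `ε̂ > 0` such that every `p ≪ q` admits a `(τ(p,q)·ε̂)`-τ-midpoint `m`
with `(1-c)·T p + c·T q ≤ T m ≤ c·T p + (1-c)·T q`, then `X` is intrinsic. -/
theorem approx_tau_midpoints_imply_intrinsic
    {X : Type*} [MetricSpace X] [CompleteSpace X]
    (L : LorentzianPreLengthSpace X) (T : X → ℝ)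
    (h_lcc : L.LocallyCausallyClosed)
    (h_scc : L.SufficientlyCausallyConnected)
    (hT : L.IsTimeFunction T)
    (h_bg : ∀ p q : X, dist p q = L.nullDist T p q)
    (h_mid : L.HasApproxTauMidpoints)
    (c : ℝ) (hc0 : 0 < c) (hc2 : c ≤ 1 / 2)
    (εhat : ℝ) (hεhat : 0 < εhat)
    (h_comp : ∀ p q : X, L.timelike p q → ∃ m : X,
      L.IsEpsTauMidpoint (L.tau p q * ENNReal.ofReal εhat) p m q ∧
      (1 - c) * T p + c * T q ≤ T m ∧ T m ≤ c * T p + (1 - c) * T q) :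
    L.IsIntrinsic := by
  exact approx_tau_midpoints_imply_intrinsic_general h_lcc
    (hT.isCausallyAntiLipschitz h_scc.2.1 h_bg) (h_scc.2.1.hasIntermediateTimes hT.1) h_mid
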